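/- arXiv:1810.10439 — 7 statements merged into one kernel-verified Lean document; each statement's English description precedes it below -/
import Mathlib

section
/- Let A ⊆ E, let F i : E → ℝ for i : Fin (p+1) (F 0 is the cost and F i, i ≥ 1, are the inequality constraints), with admissible set D_P = {x ∈ A | ∀ i ≠ 0, F i x ≤ 0}. Suppose that for every y ∈ E there is a family of approximations G y i : E → ℝ satisfying, for all i and x, the overestimation property G y i x ≥ F i x and the matching-value property G y i y = F i y. Let x : ℕ → E be a sequence such that x 0 ∈ D_P and, for every k, x (k+1) belongs to D_cvx (x k) := {z ∈ A | ∀ i ≠ 0, G (x k) i z ≤ 0} and minimizes G (x k) 0 over D_cvx (x k). Then: (a) every iterate is admissible, x k ∈ D_P for all k; (b) the cost sequence is non-increasing, F 0 (x (k+1)) ≤ F 0 (x k) for all k; and (c) if F 0 is bounded below on D_P, the cost sequence F 0 (x k) converges to some real limit as k → ∞. -/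
/-! Overestimation gives feasibility of each new iterate for the original constraints. An admissible
point is then admissible for the subproblem expanded around it, by the matching values, so
minimality yields `F 0 (x (k+1)) ≤ G (x k) 0 (x (k+1)) ≤ G (x k) 0 (x k) = F 0 (x k)`. The costs
therefore form an antitone sequence, which converges to its infimum when bounded below. -/

/-- Theorem 1 (Marks and Wright): recursive feasibility, descent, and cost convergence
of the SCP with inner-convex approximations.  `F 0` is the cost, `F i` for `i ≠ 0` the
inequality constraints, `A` the affine equality-constraint set, and `G y i` is the
inner-convex approximation of `F i` around the expansion point `y`. -/
theorem scp_recursively_feasible_descending_convergent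
    (n p : ℕ)
    (A : Set (EuclideanSpace ℝ (Fin n)))
    (F : Fin (p + 1) → EuclideanSpace ℝ (Fin n) → ℝ)
    (G : EuclideanSpace ℝ (Fin n) → Fin (p + 1) → EuclideanSpace ℝ (Fin n) → ℝ)
    (hover : ∀ y i x, G y i x ≥ F i x)
    (hmatch : ∀ y i, G y i y = F i y)
    (x : ℕ → EuclideanSpace ℝ (Fin n))
    (hx0 : x 0 ∈ {z ∈ A | ∀ i, i ≠ 0 → F i z ≤ 0})
    (hmem : ∀ k, x (k + 1) ∈ {z ∈ A | ∀ i, i ≠ 0 → G (x k) i z ≤ 0})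
    (hmin : ∀ k, ∀ z ∈ {z ∈ A | ∀ i, i ≠ 0 → G (x k) i z ≤ 0},
      G (x k) 0 (x (k + 1)) ≤ G (x k) 0 z) :
    (∀ k, x k ∈ {z ∈ A | ∀ i, i ≠ 0 → F i z ≤ 0}) ∧
    (∀ k, F 0 (x (k + 1)) ≤ F 0 (x k)) ∧
    ((∃ c : ℝ, ∀ z ∈ {z ∈ A | ∀ i, i ≠ 0 → F i z ≤ 0}, c ≤ F 0 z) →
      ∃ L : ℝ, Filter.Tendsto (fun k => F 0 (x k)) Filter.atTop (nhds L)) := by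
  have feas : ∀ k, x k ∈ {z ∈ A | ∀ i, i ≠ 0 → F i z ≤ 0} := by
    intro k
    cases k with
    | zero => exact hx0
    | succ k =>
      -- overestimation makes the convexified admissible set a subset of the admissible set
      exact ⟨(hmem k).1, fun i hi => (hover (x k) i _).trans ((hmem k).2 i hi)⟩
  have desc : ∀ k, F 0 (x (k + 1)) ≤ F 0 (x k) := by
    intro k
    -- by the matching values, `x k` competes in the subproblem expanded around itself
    have hself : x k ∈ {z ∈ A | ∀ i, i ≠ 0 → G (x k) i z ≤ 0} :=
      ⟨(feas k).1, fun i hi => (hmatch (x k) i).le.trans ((feas k).2 i hi)⟩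
    calc F 0 (x (k + 1)) ≤ G (x k) 0 (x (k + 1)) := hover _ _ _
      _ ≤ G (x k) 0 (x k) := hmin k _ hself
      _ = F 0 (x k) := hmatch _ _
  refine ⟨feas, desc, ?_⟩
  rintro ⟨c, hc⟩
  exact ⟨_, tendsto_atTop_ciInf (antitone_nat_of_succ_le desc)
    ⟨c, Set.forall_mem_range.2 fun k => hc _ (feas k)⟩⟩
end

section
/- Let f : E → ℝ be differentiable on E and suppose its gradient ∇f : E → E is Lipschitz with constant K ≥ 0. Then the function x ↦ K * ‖x‖² − f x is convex on E; consequently f x = K‖x‖² − (K‖x‖² − f x) is a difference of convex functions. -/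
/-!
Along a line `t ↦ x + t • v`, the function `K‖·‖² - f` has derivative
`2K⟪x + t • v, v⟫ - ⟪∇f (x + t • v), v⟫`. Between `s ≤ t` the first term grows by
`2K(t - s)‖v‖²`, while by Cauchy–Schwarz and the Lipschitz bound the second changes by at most
`K(t - s)‖v‖²`. So the derivative is monotone (`dc_slope_monotone`), the restriction to every
line is convex, and hence so is the function. (The constant `K / 2` would already suffice.)
-/

theorem dc_hasDerivAt_line {n : ℕ} {f : EuclideanSpace ℝ (Fin n) → ℝ}
    (hf : Differentiable ℝ f) (K : ℝ) (x v : EuclideanSpace ℝ (Fin n)) (t : ℝ) :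
    HasDerivAt (fun t : ℝ => K * ‖x + t • v‖ ^ 2 - f (x + t • v))
      (K * (2 * inner ℝ (x + t • v) v) - inner ℝ (gradient f (x + t • v)) v) t := by
  have hline : HasDerivAt (fun t : ℝ => x + t • v) v t := by
    simpa using ((hasDerivAt_id t).smul_const v).const_add x
  have h2 := (hf (x + t • v)).hasFDerivAt.comp_hasDerivAt t hline
  rw [← inner_gradient_left] at h2
  exact (hline.norm_sq.const_mul K).sub h2

theorem dc_slope_monotone {n : ℕ} {f : EuclideanSpace ℝ (Fin n) → ℝ}
    {K : ℝ} (hK : 0 ≤ K)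
    (hlip : ∀ x y, ‖gradient f x - gradient f y‖ ≤ K * ‖x - y‖)
    (x v : EuclideanSpace ℝ (Fin n)) :
    Monotone (fun t : ℝ =>
      K * (2 * inner ℝ (x + t • v) v) - inner ℝ (gradient f (x + t • v)) v) := by
  intro s t hst
  have hts : 0 ≤ t - s := sub_nonneg.2 hst
  have hd : (x + t • v) - (x + s • v) = (t - s) • v := by module
  have hquad : inner ℝ (x + t • v) v - inner ℝ (x + s • v) v = (t - s) * ‖v‖ ^ 2 := by
    rw [← inner_sub_left, hd, real_inner_smul_left, real_inner_self_eq_norm_sq]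
  have hgrad : inner ℝ (gradient f (x + t • v)) v - inner ℝ (gradient f (x + s • v)) v
      ≤ K * ((t - s) * ‖v‖ ^ 2) := by
    rw [← inner_sub_left]
    calc _ ≤ ‖gradient f (x + t • v) - gradient f (x + s • v)‖ * ‖v‖ := real_inner_le_norm _ _
      _ ≤ K * ‖(x + t • v) - (x + s • v)‖ * ‖v‖ := by gcongr; exact hlip _ _
      _ = K * ((t - s) * ‖v‖ ^ 2) := by
        rw [hd, norm_smul, Real.norm_of_nonneg hts]; ring
  have hnonneg : 0 ≤ K * ((t - s) * ‖v‖ ^ 2) := by positivity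
  rw [← hquad] at hgrad hnonneg
  dsimp only
  linarith

/-- Section 6, Eq. (17) (regularization): if `f` is differentiable with `K`-Lipschitz
gradient, then `x ↦ K‖x‖² - f x` is convex; hence
`f x = K‖x‖² - (K‖x‖² - f x)` is a difference of convex functions. -/
theorem regularization_dc_decomposition
    (n : ℕ)
    (f : EuclideanSpace ℝ (Fin n) → ℝ)
    (hf : Differentiable ℝ f)
    (K : ℝ) (hK : 0 ≤ K)
    (hlip : ∀ x y, ‖gradient f x - gradient f y‖ ≤ K * ‖x - y‖) :
    ConvexOn ℝ Set.univ (fun x : EuclideanSpace ℝ (Fin n) => K * ‖x‖ ^ 2) ∧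
    ConvexOn ℝ Set.univ (fun x : EuclideanSpace ℝ (Fin n) => K * ‖x‖ ^ 2 - f x) ∧
    (∀ x : EuclideanSpace ℝ (Fin n), f x = K * ‖x‖ ^ 2 - (K * ‖x‖ ^ 2 - f x)) := by
  refine ⟨?_, ⟨convex_univ, ?_⟩, fun x => by ring⟩
  · exact (convexOn_univ_norm.pow (fun x _ => norm_nonneg x) 2).smul hK
  · intro x _ y _ a b ha hb hab
    have hder := dc_hasDerivAt_line hf K x (y - x)
    have hconv : ConvexOn ℝ Set.univ
        (fun t : ℝ => K * ‖x + t • (y - x)‖ ^ 2 - f (x + t • (y - x))) := by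
      refine Monotone.convexOn_univ_of_deriv (fun t => (hder t).differentiableAt) ?_
      rw [show deriv _ = _ from funext fun t => (hder t).deriv]
      exact dc_slope_monotone hK hlip x (y - x)
    -- The point `a • x + b • y` sits at parameter `b = a * 0 + b * 1` on the line.
    have h := hconv.2 (Set.mem_univ 0) (Set.mem_univ 1) ha hb hab
    have hpt : x + b • (y - x) = a • x + b • y := by
      obtain rfl : a = 1 - b := by linarith
      module
    simpa [hpt] using h
end

section
/- Let m ≥ 1 and n ≥ 1 be natural numbers, v : Fin n → ℝ, and T : (Fin m → Fin n) → ℝ a family of coefficients indexed by multi-indices j : Fin m → Fin n. Define T_diag i = T (fun _ => i) (the coefficient on the main diagonal associated with index i), and T_cvx i = ∑ over all non-constant j with i in the range of j of |T j| (the sum of absolute values of all off-diagonal coefficients involving index i). Then the homogeneous form is overestimated by its convexification: ∑_{j : Fin m → Fin n} T j * ∏_{l : Fin m} v (j l) ≤ ∑_{i : Fin n} ( max (T_diag i * (v i)^m) 0 + T_cvx i * |v i|^m ). -/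
/-!
Split the form into constant and non-constant multi-indices. Since `m ≥ 1`, the constant ones
correspond bijectively to indices `i`, and each such term is at most its positive part. For a
non-constant `j`, the product of the `|v (j l)|` is at most the `m`-th power of its largest factor
(`abs_prod_le_sum_range`), hence at most the sum of `|v i| ^ m` over the indices `i` occurring in
`j`. Exchanging the sums over `j` and `i` then collects the off-diagonal coefficients.
-/

/-- The largest factor dominates the product, and its `m`-th power is one of the nonnegative
summands on the right. A nonempty product is needed: for `m = 0` the left side is `1` and the
right side is an empty sum. -/
lemma abs_prod_le_sum_range {m n : ℕ} (hm : 1 ≤ m) (v : Fin n → ℝ) (j : Fin m → Fin n) :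
    |∏ l : Fin m, v (j l)| ≤
      ∑ i ∈ Finset.univ.filter (fun i => ∃ l, j l = i), |v i| ^ m := by
  obtain ⟨l₀, -, hl₀⟩ := Finset.exists_max_image Finset.univ (fun l : Fin m => |v (j l)|)
    ⟨⟨0, hm⟩, Finset.mem_univ _⟩
  calc |∏ l : Fin m, v (j l)| = ∏ l : Fin m, |v (j l)| := Finset.abs_prod _ _
    _ ≤ ∏ _l : Fin m, |v (j l₀)| := Finset.prod_le_prod (fun _ _ => abs_nonneg _) hl₀
    _ = |v (j l₀)| ^ m := by simp
    _ ≤ _ := Finset.single_le_sum (f := fun i => |v i| ^ m)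
        (fun _ _ => by positivity) (by simp)

/-- Section 7, Eq. (29): the homogeneous order-`m` form `T δx^α` is overestimated
by its convexification `cvx(T δx^α) = ∑ i (|T_diag,i δx_i^m|⁺ + T_cvx,i |δx_i|^m)`,
where `T_diag i` is the diagonal coefficient and `T_cvx i` sums the absolute values
of the off-diagonal coefficients involving the index `i`. -/
theorem homogeneous_form_convex_overestimator
    (m n : ℕ) (hm : 1 ≤ m) (hn : 1 ≤ n)
    (v : Fin n → ℝ)
    (T : (Fin m → Fin n) → ℝ) :
    ∑ j : Fin m → Fin n, T j * ∏ l : Fin m, v (j l) ≤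
      ∑ i : Fin n,
        (max (T (fun _ => i) * (v i) ^ m) 0 +
          (∑ j ∈ Finset.univ.filter
              (fun j : Fin m → Fin n => (∃ l, j l = i) ∧ ¬ (∀ l l', j l = j l')),
            |T j|) * |v i| ^ m) := by
  rw [Finset.sum_add_distrib,
    ← Finset.sum_filter_add_sum_filter_not Finset.univ
      (fun j : Fin m → Fin n => ∀ l l', j l = j l')]
  apply add_le_add
  · have hdiag : ∑ j ∈ Finset.univ.filter (fun j : Fin m → Fin n => ∀ l l', j l = j l'),
        T j * ∏ l : Fin m, v (j l) = ∑ i : Fin n, T (fun _ => i) * (v i) ^ m := by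
      symm
      refine Finset.sum_bij (fun i _ => fun _ => i) ?_ ?_ ?_ ?_
      · simp
      · intro a _ b _ h
        exact congrFun h ⟨0, hm⟩
      · intro j hj
        exact ⟨j ⟨0, hm⟩, Finset.mem_univ _,
          funext fun l => (Finset.mem_filter.mp hj).2 _ l⟩
      · simp
    rw [hdiag]
    exact Finset.sum_le_sum fun i _ => le_max_left _ _
  · calc _ ≤ ∑ j ∈ Finset.univ.filter (fun j : Fin m → Fin n => ¬ ∀ l l', j l = j l'),
          ∑ i ∈ Finset.univ.filter (fun i => ∃ l, j l = i), |T j| * |v i| ^ m := by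
          refine Finset.sum_le_sum fun j _ => ?_
          rw [← Finset.mul_sum]
          refine (le_abs_self _).trans ?_
          rw [abs_mul]
          exact mul_le_mul_of_nonneg_left (abs_prod_le_sum_range hm v j) (abs_nonneg _)
      _ = _ := by
          simp_rw [Finset.sum_mul]
          refine Finset.sum_comm' fun j i => ?_
          simp only [Finset.mem_filter, Finset.mem_univ, true_and, and_true]
          exact and_comm
end

section
/- Let m ≥ 1 and n ≥ 1 be natural numbers, v : Fin n → ℝ, and j : Fin m → Fin n any multi-index. Then the product of the corresponding coordinates is bounded by the sum of m-th powers over the distinct indices appearing in j: ∏_{l : Fin m} |v (j l)| ≤ ∑_{i ∈ image of j} |v i|^m. -/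
/-- Key estimate behind Section 7, Eq. (29): for any multi-index `j : Fin m → Fin n`,
the product of the coordinates `|v (j l)|` is bounded by the sum of the `m`-th powers
`|v i|^m` over the distinct indices `i` appearing in `j`. -/
theorem monomial_le_sum_powers
    (m n : ℕ) (hm : 1 ≤ m) (hn : 1 ≤ n)
    (v : Fin n → ℝ)
    (j : Fin m → Fin n) :
    ∏ l : Fin m, |v (j l)| ≤ ∑ i ∈ Finset.image j Finset.univ, |v i| ^ m := by
  -- `m ≥ 1` makes `Fin m` nonempty, so some position `l₀` carries the largest factor;
  -- each factor is at most that one, and its `m`-th power is already a term of the sum.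
  obtain ⟨l₀, -, hmax⟩ := Finset.exists_max_image Finset.univ (fun l => |v (j l)|)
    ⟨(⟨0, hm⟩ : Fin m), Finset.mem_univ _⟩
  calc ∏ l : Fin m, |v (j l)| ≤ ∏ _l : Fin m, |v (j l₀)| :=
        Finset.prod_le_prod (fun l _ => abs_nonneg _) hmax
    _ = |v (j l₀)| ^ m := by simp
    _ ≤ ∑ i ∈ Finset.image j Finset.univ, |v i| ^ m :=
        Finset.single_le_sum (f := fun i => |v i| ^ m) (fun i _ => by positivity)
          (Finset.mem_image_of_mem j (Finset.mem_univ l₀))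
end

section
/- Let m ≥ 1 be a natural number, a : Fin n → ℝ arbitrary coefficients, and c : Fin n → ℝ with c i ≥ 0 for all i. Then the function x ↦ ∑_{i : Fin n} ( max (a i * (x i)^m) 0 + c i * |x i|^m ) is convex on E = EuclideanSpace ℝ (Fin n). -/
/-!
For `m ≥ 1`, splitting on the sign of `t` shows that the positive part of `a * t ^ m` is
`a⁺ (t⁺) ^ m + ((-1) ^ m a)⁺ (t⁻) ^ m` (`max_mul_pow_eq`), whatever the parity of `m` and the
sign of `a`. Together with `c * |t| ^ m` this exhibits each summand as a nonnegative combination of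
`m`-th powers of the nonnegative convex functions `t⁺`, `t⁻` and `|t|`. Composing with the linear
coordinate maps and summing preserves convexity.
-/

theorem max_mul_pow_eq {m : ℕ} (hm : 1 ≤ m) (a t : ℝ) :
    max (a * t ^ m) 0 = max a 0 * max t 0 ^ m + max ((-1) ^ m * a) 0 * max (-t) 0 ^ m := by
  have hm0 : m ≠ 0 := by omega
  rcases le_total 0 t with ht | ht
  · rw [max_eq_left ht, max_eq_right (neg_nonpos.2 ht), zero_pow hm0, mul_zero, add_zero,
      max_mul_of_nonneg _ _ (pow_nonneg ht m), zero_mul]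
  · have ht' : 0 ≤ -t := neg_nonneg.2 ht
    rw [max_eq_right ht, max_eq_left ht', zero_pow hm0, mul_zero, zero_add,
      max_mul_of_nonneg _ _ (pow_nonneg ht' m), zero_mul, mul_right_comm, ← mul_pow, neg_one_mul,
      neg_neg, mul_comm]

theorem convexOn_summand {m : ℕ} (hm : 1 ≤ m) (a : ℝ) {c : ℝ} (hc : 0 ≤ c) :
    ConvexOn ℝ Set.univ (fun t : ℝ => max (a * t ^ m) 0 + c * |t| ^ m) := by
  have hid : ConvexOn ℝ Set.univ (fun t : ℝ => t) := convexOn_id convex_univ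
  have hneg : ConvexOn ℝ Set.univ (fun t : ℝ => -t) := (concaveOn_id convex_univ).neg
  have h0 : ConvexOn ℝ Set.univ (fun _ : ℝ => (0 : ℝ)) := convexOn_const 0 convex_univ
  have hp : ConvexOn ℝ Set.univ (fun t : ℝ => max t 0 ^ m) :=
    (hid.sup h0).pow (fun _ _ => le_max_right _ _) m
  have hn : ConvexOn ℝ Set.univ (fun t : ℝ => max (-t) 0 ^ m) :=
    (hneg.sup h0).pow (fun _ _ => le_max_right _ _) m
  have habs : ConvexOn ℝ Set.univ (fun t : ℝ => |t| ^ m) :=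
    (hid.sup hneg).pow (fun t _ => abs_nonneg t) m
  simp only [max_mul_pow_eq hm]
  exact ((hp.smul (le_max_right a 0)).add (hn.smul (le_max_right ((-1) ^ m * a) 0))).add
    (habs.smul hc)

/-- Section 7, Eq. (29): convexity of the Taylor-based overestimator
`x ↦ ∑ i (|a i * x i ^ m|⁺ + c i * |x i|^m)` with nonnegative coefficients `c i`. -/
theorem overestimator_convex
    (n m : ℕ) (hm : 1 ≤ m)
    (a c : Fin n → ℝ) (hc : ∀ i, 0 ≤ c i) :
    ConvexOn ℝ Set.univ (fun x : EuclideanSpace ℝ (Fin n) =>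
      ∑ i : Fin n, (max (a i * (x i) ^ m) 0 + c i * |x i| ^ m)) := by
  refine ⟨convex_univ, fun x _ y _ p q hp hq hpq => ?_⟩
  simp only [Finset.smul_sum, ← Finset.sum_add_distrib]
  exact Finset.sum_le_sum fun i _ =>
    (convexOn_summand hm (a i) (hc i)).2 (Set.mem_univ (x i)) (Set.mem_univ (y i)) hp hq hpq
end

section
/- Let p be a multivariate real polynomial in n variables and let f : E → ℝ be its evaluation function, where E = EuclideanSpace ℝ (Fin n). Then for every expansion point x_e ∈ E there exists a function g : E → ℝ which is an inner-convex approximation of f at x_e: g is convex on E, g x ≥ f x for every x ∈ E, g x_e = f x_e, g is differentiable at x_e, and the derivative of g at x_e equals the derivative of f at x_e. -/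
/-!
The first-order Taylor remainder of a polynomial at `x_e` is bounded, on the whole space, by
`C * ‖h‖ ^ 2 * (1 + ‖h‖) ^ N` with `h = x - x_e`, for suitable `C ≥ 0` and `N`
(`HasRemainderBound`). Constants have such a bound, and it is inherited by sums and by products
with coordinate functions, so `exists_hasRemainderBound` follows by induction on the polynomial.

The bounding function is a convex function of `x` (`convexOn_remainderBound`), and it vanishes to
second order at `x_e`. Adding it to the affine part of `f` at `x_e` therefore gives a convex
overestimator of `f`, with the same value and derivative as `f` at `x_e`
(`HasRemainderBound.hasFDerivAt`).
-/

/-- `u` differs from the affine function `x ↦ u e + L (x - e)` by at most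
`C * ‖x - e‖ ^ 2 * (1 + ‖x - e‖) ^ N`, for every `x`. -/
def HasRemainderBound {E : Type*} [NormedAddCommGroup E] [NormedSpace ℝ E]
    (u : E → ℝ) (e : E) (L : E →L[ℝ] ℝ) (C : ℝ) (N : ℕ) : Prop :=
  ∀ x, |u x - u e - L (x - e)| ≤ C * (‖x - e‖ ^ 2 * (1 + ‖x - e‖) ^ N)

section

variable {E : Type*} [NormedAddCommGroup E] [NormedSpace ℝ E]

/-- Divided by `‖x - e‖`, the bound still tends to `0` as `x → e`. -/
theorem HasRemainderBound.hasFDerivAt {u : E → ℝ} {e : E} {L : E →L[ℝ] ℝ} {C : ℝ} {N : ℕ}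
    (h : HasRemainderBound u e L C N) : HasFDerivAt u L e := by
  rw [hasFDerivAt_iff_tendsto]
  have hlim : Filter.Tendsto (fun x => C * (‖x - e‖ * (1 + ‖x - e‖) ^ N)) (nhds e) (nhds 0) := by
    have hc : Continuous (fun x : E => C * (‖x - e‖ * (1 + ‖x - e‖) ^ N)) := by fun_prop
    simpa using hc.tendsto e
  refine squeeze_zero (fun x => by positivity) (fun x => ?_) hlim
  rcases (norm_nonneg (x - e)).eq_or_lt with h0 | h0
  · simp [← h0]
  · rw [inv_mul_le_iff₀ h0, Real.norm_eq_abs]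
    exact (h x).trans_eq (by ring)

theorem convexOn_remainderBound (e : E) (N : ℕ) :
    ConvexOn ℝ Set.univ (fun x : E => ‖x - e‖ ^ 2 * (1 + ‖x - e‖) ^ N) := by
  have hn : ConvexOn ℝ Set.univ (fun x : E => ‖x - e‖) := by
    simpa [dist_eq_norm] using convexOn_univ_dist (E := E) e
  have h2 := hn.pow (fun x _ => norm_nonneg _) 2
  have h1 : ConvexOn ℝ Set.univ (fun x : E => 1 + ‖x - e‖) :=
    (convexOn_const 1 convex_univ).add hn
  have hN := h1.pow (fun x _ => by positivity) N
  -- Both factors increase with `‖x - e‖`, so their product is again convex.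
  refine h2.mul hN (fun x _ => by simp only [Pi.pow_apply]; positivity)
    (fun x _ => by positivity) ?_
  intro x _ y _ hxy
  simp only [Pi.pow_apply] at hxy ⊢
  have hlt := lt_of_pow_lt_pow_left₀ N (by positivity) hxy
  have hle : ‖x - e‖ ≤ ‖y - e‖ := by linarith
  gcongr

theorem HasRemainderBound.add {u v : E → ℝ} {e : E} {L M : E →L[ℝ] ℝ} {C D : ℝ} {N K : ℕ}
    (hC : 0 ≤ C) (hD : 0 ≤ D)
    (hu : HasRemainderBound u e L C N) (hv : HasRemainderBound v e M D K) :
    HasRemainderBound (fun x => u x + v x) e (L + M) (C + D) (N + K) := by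
  intro x
  have h1 : (1 : ℝ) ≤ 1 + ‖x - e‖ := by linarith [norm_nonneg (x - e)]
  have e1 : u x + v x - (u e + v e) - (L + M) (x - e)
      = (u x - u e - L (x - e)) + (v x - v e - M (x - e)) := by
    simp only [add_apply]; ring
  rw [e1]
  calc _ ≤ _ := abs_add_le _ _
    _ ≤ C * (‖x - e‖ ^ 2 * (1 + ‖x - e‖) ^ N) + D * (‖x - e‖ ^ 2 * (1 + ‖x - e‖) ^ K) :=
        add_le_add (hu x) (hv x)
    _ ≤ C * (‖x - e‖ ^ 2 * (1 + ‖x - e‖) ^ (N + K))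
        + D * (‖x - e‖ ^ 2 * (1 + ‖x - e‖) ^ (N + K)) := by
        gcongr <;> first | exact h1 | omega
    _ = _ := by ring

/-- In the remainder of `u * l`, the product `L h * l h` of the two linear parts is quadratic in
`h = x - e`, and the remainder of `u` gets multiplied by `l e + l h`, which grows at most like
`1 + ‖h‖`. -/
theorem HasRemainderBound.mul_clm {u : E → ℝ} {e : E} {L : E →L[ℝ] ℝ} {C : ℝ} {N : ℕ}
    (hC : 0 ≤ C) (hu : HasRemainderBound u e L C N) (l : E →L[ℝ] ℝ) :
    HasRemainderBound (fun x => u x * l x) e (u e • l + l e • L)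
      (‖L‖ * ‖l‖ + C * (|l e| + ‖l‖)) (N + 1) := by
  intro x
  have hx : l x = l e + l (x - e) := by simp
  have e1 : u x * l x - u e * l e - (u e • l + l e • L) (x - e)
      = L (x - e) * l (x - e) + (u x - u e - L (x - e)) * (l e + l (x - e)) := by
    rw [hx]
    simp only [add_apply, smul_apply, smul_eq_mul]
    ring
  rw [e1]
  have hL : |L (x - e)| ≤ ‖L‖ * ‖x - e‖ := L.le_opNorm _
  have hl : |l (x - e)| ≤ ‖l‖ * ‖x - e‖ := l.le_opNorm _
  have hr := hu x
  set t := ‖x - e‖ with ht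
  have t0 : 0 ≤ t := norm_nonneg _
  have h1 : (1 : ℝ) ≤ (1 + t) ^ (N + 1) := one_le_pow₀ (by linarith)
  have hs : |l e + l (x - e)| ≤ (|l e| + ‖l‖) * (1 + t) := by
    refine (abs_add_le _ _).trans ?_
    nlinarith [abs_nonneg (l e), norm_nonneg l, mul_nonneg (abs_nonneg (l e)) t0]
  calc _ ≤ _ := abs_add_le _ _
    _ = |L (x - e)| * |l (x - e)| + |u x - u e - L (x - e)| * |l e + l (x - e)| := by
        rw [abs_mul, abs_mul]
    _ ≤ (‖L‖ * t) * (‖l‖ * t) + (C * (t ^ 2 * (1 + t) ^ N)) * ((|l e| + ‖l‖) * (1 + t)) := by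
        gcongr
    _ = ‖L‖ * ‖l‖ * t ^ 2 * 1 + C * (|l e| + ‖l‖) * (t ^ 2 * (1 + t) ^ (N + 1)) := by ring
    _ ≤ ‖L‖ * ‖l‖ * t ^ 2 * (1 + t) ^ (N + 1)
        + C * (|l e| + ‖l‖) * (t ^ 2 * (1 + t) ^ (N + 1)) := by gcongr
    _ = _ := by ring

end

theorem exists_hasRemainderBound {n : ℕ} (p : MvPolynomial (Fin n) ℝ)
    (e : EuclideanSpace ℝ (Fin n)) :
    ∃ (L : EuclideanSpace ℝ (Fin n) →L[ℝ] ℝ) (C : ℝ) (N : ℕ), 0 ≤ C ∧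
      HasRemainderBound (fun x => MvPolynomial.eval (fun i => x i) p) e L C N := by
  induction p using MvPolynomial.induction_on with
  | C a => exact ⟨0, 0, 0, le_rfl, fun x => by simp⟩
  | add p q hp hq =>
    obtain ⟨L, C, N, hC, h⟩ := hp
    obtain ⟨M, D, K, hD, h'⟩ := hq
    refine ⟨L + M, C + D, N + K, by positivity, ?_⟩
    simpa only [map_add] using h.add hC hD h'
  | mul_X p i hp =>
    obtain ⟨L, C, N, hC, h⟩ := hp
    have heval : (fun x : EuclideanSpace ℝ (Fin n) =>
          MvPolynomial.eval (fun j => x j) (p * MvPolynomial.X i))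
        = fun x => MvPolynomial.eval (fun j => x j) p
            * (EuclideanSpace.proj i : EuclideanSpace ℝ (Fin n) →L[ℝ] ℝ) x := by
      funext x
      simp
    rw [heval]
    exact ⟨_, _, _, by positivity, h.mul_clm hC _⟩

/-- Section 7, Eq. (30): for the evaluation `f` of any multivariate real polynomial
and any expansion point `x_e`, there exists an inner-convex approximation `g` of `f`
at `x_e`: `g` is convex, overestimates `f` everywhere, matches `f` at `x_e`, and has
the same derivative as `f` at `x_e`. -/
theorem polynomial_has_inner_convex_approximation
    (n : ℕ)
    (p : MvPolynomial (Fin n) ℝ)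
    (f : EuclideanSpace ℝ (Fin n) → ℝ)
    (hf : ∀ x, f x = MvPolynomial.eval (fun i => x i) p)
    (x_e : EuclideanSpace ℝ (Fin n)) :
    ∃ g : EuclideanSpace ℝ (Fin n) → ℝ,
      ConvexOn ℝ Set.univ g ∧
      (∀ x, g x ≥ f x) ∧
      g x_e = f x_e ∧
      DifferentiableAt ℝ g x_e ∧
      fderiv ℝ g x_e = fderiv ℝ f x_e := by
  obtain ⟨L, C, N, hC, h⟩ := exists_hasRemainderBound p x_e
  obtain rfl : f = fun x => MvPolynomial.eval (fun i => x i) p := funext hf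
  set f := fun x : EuclideanSpace ℝ (Fin n) => MvPolynomial.eval (fun i => x i) p
  set g : EuclideanSpace ℝ (Fin n) → ℝ := fun x =>
    (L x + (f x_e - L x_e)) + C * (‖x - x_e‖ ^ 2 * (1 + ‖x - x_e‖) ^ N) with hg
  have hge : g x_e = f x_e := by simp [hg]
  -- The remainder of `g` is exactly the bound for the remainder of `f`.
  have hgb : HasRemainderBound g x_e L C N := by
    intro x
    have e1 : g x - g x_e - L (x - x_e) = C * (‖x - x_e‖ ^ 2 * (1 + ‖x - x_e‖) ^ N) := by
      rw [hge, map_sub]; simp only [hg]; ring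
    rw [e1, abs_of_nonneg (by positivity)]
  refine ⟨g, ?_, fun x => ?_, hge, hgb.hasFDerivAt.differentiableAt, ?_⟩
  · exact ((L.toLinearMap.convexOn convex_univ).add (convexOn_const _ convex_univ)).add
      ((convexOn_remainderBound x_e N).smul hC)
  · have h1 := (le_abs_self _).trans (h x)
    rw [map_sub] at h1
    simp only [hg]
    linarith
  · rw [hgb.hasFDerivAt.fderiv, h.hasFDerivAt.fderiv]
end

section
/- Let E = EuclideanSpace ℝ (Fin n), G : E → E (the gradient of the Lagrangian), H : E → (E →L[ℝ] E) (its Hessian), constants K_L ≥ 0, K_cvx ≥ 0, λ > 0, and a sequence x : ℕ → E. Suppose: (i) for all a, b ∈ E, ‖G b − G a − H a (b − a)‖ ≤ (K_L/2) ‖b − a‖²; (ii) for every k, ‖G (x k) + H (x k) (x (k+1) − x k)‖ ≤ (K_cvx/2) ‖x (k+1) − x k‖²; and (iii) for every k, ‖x (k+1) − x k‖ ≤ ‖G (x k)‖ / λ. Then for every k ≥ 1 the iteration converges quadratically: ‖x (k+1) − x k‖ ≤ ((K_L + K_cvx) / (2 λ)) * ‖x k − x (k−1)‖². -/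
/-! The step `x (k + 1) - x k` is controlled by the gradient `G (x k)`, and that gradient is small
because the previous step nearly solved the linearization of `G` at `x (k - 1)`: it is the sum of the
Taylor remainder and the linearized residual at `x (k - 1)`, both quadratic in the previous step. -/

/-- Section 7.2 (Theorem 2): quadratic rate of convergence of the SCP iterates.
`G = ∇L` is the gradient of the Lagrangian, `H = H_L` its Hessian; hypothesis (i)
is the Lipschitz-Hessian Taylor bound, (ii) the approximate stationarity of the
convexified Lagrangian at the next iterate, and (iii) the Newton-step bound from
coercivity of the Hessian near a non-degenerate minimum. -/
theorem scp_quadratic_convergence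
    (n : ℕ)
    (G : EuclideanSpace ℝ (Fin n) → EuclideanSpace ℝ (Fin n))
    (H : EuclideanSpace ℝ (Fin n) → (EuclideanSpace ℝ (Fin n) →L[ℝ] EuclideanSpace ℝ (Fin n)))
    (K_L K_cvx lam : ℝ)
    (hKL : 0 ≤ K_L) (hKcvx : 0 ≤ K_cvx) (hlam : 0 < lam)
    (x : ℕ → EuclideanSpace ℝ (Fin n))
    (h1 : ∀ a b : EuclideanSpace ℝ (Fin n),
      ‖G b - G a - H a (b - a)‖ ≤ K_L / 2 * ‖b - a‖ ^ 2)
    (h2 : ∀ k : ℕ,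
      ‖G (x k) + H (x k) (x (k + 1) - x k)‖ ≤ K_cvx / 2 * ‖x (k + 1) - x k‖ ^ 2)
    (h3 : ∀ k : ℕ, ‖x (k + 1) - x k‖ ≤ ‖G (x k)‖ / lam) :
    ∀ k : ℕ, 1 ≤ k →
      ‖x (k + 1) - x k‖ ≤ (K_L + K_cvx) / (2 * lam) * ‖x k - x (k - 1)‖ ^ 2 := by
  rintro (_ | j) hk
  · omega
  rw [Nat.add_sub_cancel]
  -- Split `G (x (j + 1))` into its Taylor remainder at `x j` and the linearized residual there.
  have hG : ‖G (x (j + 1))‖ ≤ (K_L + K_cvx) / 2 * ‖x (j + 1) - x j‖ ^ 2 := by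
    calc ‖G (x (j + 1))‖
        = ‖(G (x (j + 1)) - G (x j) - H (x j) (x (j + 1) - x j))
            + (G (x j) + H (x j) (x (j + 1) - x j))‖ := by
          congr 1; abel
      _ ≤ K_L / 2 * ‖x (j + 1) - x j‖ ^ 2 + K_cvx / 2 * ‖x (j + 1) - x j‖ ^ 2 :=
          norm_add_le_of_le (h1 _ _) (h2 j)
      _ = (K_L + K_cvx) / 2 * ‖x (j + 1) - x j‖ ^ 2 := by ring
  calc ‖x (j + 1 + 1) - x (j + 1)‖ ≤ ‖G (x (j + 1))‖ / lam := h3 (j + 1)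
    _ ≤ (K_L + K_cvx) / 2 * ‖x (j + 1) - x j‖ ^ 2 / lam := by gcongr
    _ = (K_L + K_cvx) / (2 * lam) * ‖x (j + 1) - x j‖ ^ 2 := by field_simp
end
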